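/- Let q > 1 and let x ∈ J_q ∖ {0}. Then: (a) the quasi-greedy expansion (a_i(x)) of x in base q is infinite, i.e., it has infinitely many nonzero terms; (b) (a_i(x)) coincides with the greedy expansion (b_i(x)) if and only if (b_i(x)) is infinite; and (c) if (b_i(x)) is finite with last nonzero digit b_n at position n, then (a_i(x)) = b_1 ... b_{n−1} (b_n − 1) α_1(q) α_2(q) .... -/

import Mathlib

/-!
Write `N` for the largest integer smaller than `q`, so `N < q ≤ N + 1`. Both algorithms are orbits
of a map on remainders `y ↦ q * y - digit`, and both maps preserve the upper bound `N / (q - 1)`: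
if the digit is `N` this is the fixed-point equation of `y ↦ q * y - N`, and otherwise the new
remainder is at most `1 ≤ N / (q - 1)`. The greedy map keeps remainders nonnegative, the
quasi-greedy one keeps them positive.

If all digits vanish from some position on, the remainder is multiplied by `q > 1` forever, so by
boundedness it is not positive (`nonpos_of_geometric_of_bounded`). This gives (a) at once, and shows
that a finite greedy expansion reaches remainder `0` right after its last nonzero digit.

The two digits of a remainder `y` agree unless the greedy step lands exactly on `0`
(`qgDigit_eq_gDigit`). Hence both algorithms run in parallel as long as the greedy remainder is
nonzero, which gives (b). If the greedy step from `y` with digit `d ≥ 1` lands on `0`, then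
`q * y = d`, the quasi-greedy digit is `d - 1` and its new remainder is `1`, after which the
quasi-greedy expansion of `1` follows; this is (c).
-/

noncomputable section

/-- The largest integer smaller than `q`, as a natural number (for `q > 1` this is `⌈q⌉ - 1`). -/
def topDigit (q : ℝ) : ℕ := ⌈q⌉.toNat - 1

/-- Greedy digit associated to a remainder `y` : the largest nonnegative integer `b` with
`b < q` and `b ≤ q * y`. -/
def gDigit (q y : ℝ) : ℕ := min (topDigit q) ⌊q * y⌋₊

/-- Remainders of the greedy algorithm in base `q` starting from `x`. -/
def gRem (q x : ℝ) : ℕ → ℝ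
  | 0 => x
  | n + 1 => q * gRem q x n - gDigit q (gRem q x n)

/-- The greedy expansion of `x` in base `q`, `0`-indexed: `greedy q x n` is the digit `b_{n+1}`,
i.e. the largest integer smaller than `q` such that `∑_{i ≤ n} (greedy q x i) / q^(i+1) ≤ x`. -/
def greedy (q x : ℝ) (n : ℕ) : ℕ := gDigit q (gRem q x n)

/-- Quasi-greedy digit associated to a remainder `y` : the largest nonnegative integer `b` with
`b < q` and `b < q * y` (it is `0` when no such integer exists, matching the convention that the
quasi-greedy expansion of `0` is `0^∞`). -/
def qgDigit (q y : ℝ) : ℕ := min (topDigit q) (⌈q * y⌉.toNat - 1)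

/-- Remainders of the quasi-greedy algorithm in base `q` starting from `x`. -/
def qgRem (q x : ℝ) : ℕ → ℝ
  | 0 => x
  | n + 1 => q * qgRem q x n - qgDigit q (qgRem q x n)

/-- The quasi-greedy expansion of `x` in base `q`, `0`-indexed: `quasiGreedy q x n` is the digit
`a_{n+1}`, i.e. the largest integer smaller than `q` with `∑_{i ≤ n} (quasiGreedy q x i) / q^(i+1) < x`
(with the convention `quasiGreedy q 0 = 0^∞`). -/
def quasiGreedy (q x : ℝ) (n : ℕ) : ℕ := qgDigit q (qgRem q x n)

/-- `alphaSeq q` is the quasi-greedy expansion of `1` in base `q` (`0`-indexed: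
`alphaSeq q (i-1) = α_i(q)`). -/
def alphaSeq (q : ℝ) : ℕ → ℕ := quasiGreedy q 1

/-- Strict lexicographic order on digit sequences. -/
def lexLt (a b : ℕ → ℕ) : Prop := ∃ n, (∀ i, i < n → a i = b i) ∧ a n < b n

/-- Lexicographic order on digit sequences. -/
def lexLe (a b : ℕ → ℕ) : Prop := lexLt a b ∨ a = b

/-- `c` is an expansion of `x` in base `q`: the digits are nonnegative integers smaller than `q`
and `x = ∑_{i≥0} c_i / q^(i+1)`. -/
def IsExpansion (q : ℝ) (c : ℕ → ℕ) (x : ℝ) : Prop :=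
  (∀ i, (c i : ℝ) < q) ∧ x = ∑' i : ℕ, (c i : ℝ) / q ^ (i + 1)

/-- The interval `J_q = [0, (⌈q⌉-1)/(q-1)]` of numbers having an expansion in base `q`. -/
def Jset (q : ℝ) : Set ℝ := Set.Icc 0 (((⌈q⌉ : ℝ) - 1) / (q - 1))

/-- `USet q` is the set `𝒰_q` of numbers `x ∈ J_q` having a unique expansion in base `q`. -/
def USet (q : ℝ) : Set ℝ := {x | x ∈ Jset q ∧ ∃! c, IsExpansion q c x}

/-- `USeq q` is the set `𝒰_q'` of univoque sequences in base `q`, i.e. sequences that are the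
unique expansion in base `q` of some number. -/
def USeq (q : ℝ) : Set (ℕ → ℕ) :=
  {c | ∃ x, IsExpansion q c x ∧ ∀ c', IsExpansion q c' x → c' = c}

/-- The set `𝒰` of univoque bases: `q > 1` such that `1` has a unique expansion in base `q`. -/
def UnivBases : Set ℝ := {q | 1 < q ∧ ∃! c, IsExpansion q c 1}

/-- The set `𝒱_q`: numbers `x ∈ J_q` whose quasi-greedy expansion `(a_i)` satisfies
`overline{a_{n+1} a_{n+2} …} ≤ α_1 α_2 …` whenever `a_n > 0`. -/
def VSet (q : ℝ) : Set ℝ :=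
  {x | x ∈ Jset q ∧ ∀ n, 0 < quasiGreedy q x n →
    lexLe (fun i => topDigit q - quasiGreedy q x (n + 1 + i)) (alphaSeq q)}

/-- `VSeq q` is the set `𝒱_q'` of quasi-greedy expansions of elements of `𝒱_q`. -/
def VSeq (q : ℝ) : Set (ℕ → ℕ) := (fun x => quasiGreedy q x) '' VSet q

/-- The set `𝒱` of bases `q > 1` with `overline{α_{k+1} α_{k+2} …} ≤ α_1 α_2 …` for all `k ≥ 1`. -/
def VBases : Set ℝ :=
  {q | 1 < q ∧ ∀ k, 1 ≤ k → lexLe (fun i => topDigit q - alphaSeq q (k + i)) (alphaSeq q)}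

/-- A digit sequence is infinite if it has infinitely many nonzero terms. -/
def InfiniteSeq (c : ℕ → ℕ) : Prop := ∀ N, ∃ i, N ≤ i ∧ c i ≠ 0

/-- A digit sequence is ultimately periodic if some tail of it is periodic. -/
def UltimatelyPeriodic (c : ℕ → ℕ) : Prop := ∃ n p, 0 < p ∧ ∀ i, n ≤ i → c (i + p) = c i

end

lemma topDigit_cast {q : ℝ} (hq : 1 < q) : (topDigit q : ℝ) = (⌈q⌉ : ℝ) - 1 := by
  have h1 : 1 < ⌈q⌉ := Int.lt_ceil.2 (by exact_mod_cast hq)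
  have h2 : (topDigit q : ℤ) = ⌈q⌉ - 1 := by unfold topDigit; omega
  have h3 : ((topDigit q : ℤ) : ℝ) = ⌈q⌉ - 1 := by rw [h2]; push_cast; ring
  exact_mod_cast h3

lemma le_topDigit_add_one {q : ℝ} (hq : 1 < q) : q ≤ topDigit q + 1 := by
  have h := Int.le_ceil q
  rw [topDigit_cast hq]
  linarith

/-- A step of either algorithm preserves the upper bound `topDigit q / (q - 1)`, provided it
subtracts the top digit or leaves a remainder at most `1`. -/
lemma step_le {q y : ℝ} (hq : 1 < q) (hy : y ≤ topDigit q / (q - 1)) {d : ℕ}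
    (hd : d = topDigit q ∨ q * y - d ≤ 1) : q * y - d ≤ topDigit q / (q - 1) := by
  have hq' : 0 < q - 1 := by linarith
  rw [le_div_iff₀ hq'] at hy ⊢
  rcases hd with rfl | hd
  · nlinarith
  · have := le_topDigit_add_one hq
    nlinarith

lemma gDigit_le {q y : ℝ} (hq : 1 < q) (hy : 0 ≤ y) : (gDigit q y : ℝ) ≤ q * y :=
  calc (gDigit q y : ℝ) ≤ (⌊q * y⌋₊ : ℝ) := by exact_mod_cast min_le_right _ _
    _ ≤ q * y := Nat.floor_le (by positivity)

lemma gDigit_top_or (q y : ℝ) : gDigit q y = topDigit q ∨ q * y - gDigit q y ≤ 1 := by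
  unfold gDigit
  rcases min_choice (topDigit q) ⌊q * y⌋₊ with h | h
  · exact Or.inl h
  · right
    rw [h]
    linarith [Nat.lt_floor_add_one (q * y)]

/-- For a positive real the natural number `⌈z⌉.toNat - 1` involves no truncation. -/
lemma ceil_toNat_sub_one_cast {z : ℝ} (hz : 0 < z) : ((⌈z⌉.toNat - 1 : ℕ) : ℝ) = (⌈z⌉ : ℝ) - 1 := by
  have h1 : 0 < ⌈z⌉ := Int.ceil_pos.2 hz
  have h2 : ((⌈z⌉.toNat - 1 : ℕ) : ℤ) = ⌈z⌉ - 1 := by omega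
  exact_mod_cast congrArg (Int.cast : ℤ → ℝ) h2

lemma qgDigit_lt {q y : ℝ} (hq : 1 < q) (hy : 0 < y) : (qgDigit q y : ℝ) < q * y := by
  have hz : 0 < q * y := by positivity
  calc (qgDigit q y : ℝ) ≤ ((⌈q * y⌉.toNat - 1 : ℕ) : ℝ) := by exact_mod_cast min_le_right _ _
    _ = (⌈q * y⌉ : ℝ) - 1 := ceil_toNat_sub_one_cast hz
    _ < q * y := by linarith [Int.ceil_lt_add_one (q * y)]

lemma qgDigit_top_or {q y : ℝ} (hq : 1 < q) (hy : 0 < y) :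
    qgDigit q y = topDigit q ∨ q * y - qgDigit q y ≤ 1 := by
  have hz : 0 < q * y := by positivity
  unfold qgDigit
  rcases min_choice (topDigit q) (⌈q * y⌉.toNat - 1) with h | h
  · exact Or.inl h
  · right
    rw [h, ceil_toNat_sub_one_cast hz]
    linarith [Int.le_ceil (q * y)]

/-- The quasi-greedy digit differs from the greedy one only where the greedy step lands on `0`. -/
lemma qgDigit_eq_gDigit {q y : ℝ} (hq : 1 < q) (hy : 0 < y) (h : q * y - gDigit q y ≠ 0) :
    qgDigit q y = gDigit q y := by
  have hz : 0 < q * y := by positivity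
  have hlt : (gDigit q y : ℝ) < q * y :=
    lt_of_le_of_ne (gDigit_le hq hy.le) fun e => h (by linarith)
  have hc : (gDigit q y : ℤ) < ⌈q * y⌉ := Int.lt_ceil.2 (by exact_mod_cast hlt)
  have hcf : ⌈q * y⌉ ≤ (⌊q * y⌋₊ : ℤ) + 1 :=
    Int.ceil_le.2 (by push_cast; exact (Nat.lt_floor_add_one (q * y)).le)
  unfold qgDigit
  unfold gDigit at hc ⊢
  omega

/-- Where the greedy step lands on `0`, the quasi-greedy digit is one less than the greedy one (with
truncated subtraction: both are `0` if the greedy digit is). -/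
lemma qgDigit_of_step_eq_zero {q y : ℝ} (h : q * y - gDigit q y = 0) :
    qgDigit q y = gDigit q y - 1 := by
  have hz : q * y = ((gDigit q y : ℤ) : ℝ) := by push_cast; linarith
  have hN : gDigit q y ≤ topDigit q := min_le_left _ _
  have hc : ⌈q * y⌉ = (gDigit q y : ℤ) := by rw [hz, Int.ceil_intCast]
  unfold qgDigit
  rw [hc]
  omega

lemma gRem_mem {q x : ℝ} (hq : 1 < q) (h0 : 0 ≤ x) (h1 : x ≤ topDigit q / (q - 1)) (n : ℕ) :
    0 ≤ gRem q x n ∧ gRem q x n ≤ topDigit q / (q - 1) := by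
  induction n with
  | zero => exact ⟨h0, h1⟩
  | succ n ih =>
    exact ⟨sub_nonneg.2 (gDigit_le hq ih.1), step_le hq ih.2 (gDigit_top_or _ _)⟩

lemma qgRem_mem {q x : ℝ} (hq : 1 < q) (h0 : 0 < x) (h1 : x ≤ topDigit q / (q - 1)) (n : ℕ) :
    0 < qgRem q x n ∧ qgRem q x n ≤ topDigit q / (q - 1) := by
  induction n with
  | zero => exact ⟨h0, h1⟩
  | succ n ih =>
    exact ⟨sub_pos.2 (qgDigit_lt hq ih.1), step_le hq ih.2 (qgDigit_top_or hq ih.1)⟩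

lemma nonpos_of_geometric_of_bounded {q B : ℝ} (hq : 1 < q) {r : ℕ → ℝ} {M : ℕ}
    (hB : ∀ n, r n ≤ B) (hr : ∀ n, M ≤ n → r (n + 1) = q * r n) : r M ≤ 0 := by
  by_contra! hpos
  have hpow : ∀ k, r (M + k) = q ^ k * r M := by
    intro k
    induction k with
    | zero => simp
    | succ k ih => rw [← add_assoc, hr _ (by omega), ih]; ring
  obtain ⟨k, hk⟩ := pow_unbounded_of_one_lt (B / r M) hq
  rw [div_lt_iff₀ hpos, ← hpow] at hk
  exact absurd (hB _) (not_le.2 hk)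

lemma gRem_eq_zero_of_le {q x : ℝ} {m : ℕ} (h : gRem q x m = 0) {n : ℕ} (hn : m ≤ n) :
    gRem q x n = 0 := by
  induction n, hn using Nat.le_induction with
  | base => exact h
  | succ n _ ih => simp [gRem, gDigit, ih]

lemma greedy_eq_zero_of_gRem {q x : ℝ} {n : ℕ} (h : gRem q x n = 0) : greedy q x n = 0 := by
  simp [greedy, gDigit, h]

/-- The two algorithms run in parallel as long as the greedy remainder is nonzero. -/
lemma qgRem_eq_gRem {q x : ℝ} (hq : 1 < q) (h0 : 0 ≤ x) (h1 : x ≤ topDigit q / (q - 1)) {n : ℕ}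
    (hn : ∀ i, i ≤ n → gRem q x i ≠ 0) : qgRem q x n = gRem q x n := by
  induction n with
  | zero => rfl
  | succ n ih =>
    have e := ih fun i hi => hn i (by omega)
    have hpos : 0 < gRem q x n :=
      lt_of_le_of_ne (gRem_mem hq h0 h1 n).1 (hn n (by omega)).symm
    simp only [qgRem, gRem, e]
    rw [qgDigit_eq_gDigit hq hpos (hn (n + 1) le_rfl)]

lemma quasiGreedy_eq_greedy {q x : ℝ} (hq : 1 < q) (h0 : 0 ≤ x) (h1 : x ≤ topDigit q / (q - 1))
    {n : ℕ} (hn : ∀ i, i ≤ n + 1 → gRem q x i ≠ 0) : quasiGreedy q x n = greedy q x n := by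
  have hpos : 0 < gRem q x n :=
    lt_of_le_of_ne (gRem_mem hq h0 h1 n).1 (hn n (by omega)).symm
  unfold quasiGreedy greedy
  rw [qgRem_eq_gRem hq h0 h1 fun i hi => hn i (by omega)]
  exact qgDigit_eq_gDigit hq hpos (hn (n + 1) le_rfl)

/-- The remainders after position `m` are those of the algorithm restarted at `qgRem q x m`. -/
lemma qgRem_add (q x : ℝ) (m i : ℕ) : qgRem q x (m + i) = qgRem q (qgRem q x m) i := by
  induction i with
  | zero => rfl
  | succ i ih => rw [← add_assoc]; simp only [qgRem, ih]

lemma infiniteSeq_quasiGreedy {q x : ℝ} (hq : 1 < q) (h0 : 0 < x)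
    (h1 : x ≤ topDigit q / (q - 1)) : InfiniteSeq (quasiGreedy q x) := by
  intro M
  by_contra! hzero
  refine absurd (qgRem_mem hq h0 h1 M).1 (not_lt.2 ?_)
  refine nonpos_of_geometric_of_bounded hq (fun n => (qgRem_mem hq h0 h1 n).2) fun n hn => ?_
  have hd : qgDigit q (qgRem q x n) = 0 := hzero n hn
  simp [qgRem, hd]

/-- Let `q > 1` and `x ∈ J_q \ {0}`. Then (a) the quasi-greedy expansion of
`x` is infinite; (b) it coincides with the greedy expansion iff the latter is infinite; and
(c) if the greedy expansion is finite with last nonzero digit `b_n`, then the quasi-greedy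
expansion is `b_1 … b_{n-1} (b_n - 1) α_1 α_2 …`. -/
theorem quasiGreedy_basic_properties (q : ℝ) (hq : 1 < q) (x : ℝ) (hx : x ∈ Jset q)
    (hx0 : x ≠ 0) :
    InfiniteSeq (quasiGreedy q x) ∧
    (quasiGreedy q x = greedy q x ↔ InfiniteSeq (greedy q x)) ∧
    (∀ n, greedy q x n ≠ 0 → (∀ i, n < i → greedy q x i = 0) →
      ((∀ i, i < n → quasiGreedy q x i = greedy q x i) ∧
       quasiGreedy q x n = greedy q x n - 1 ∧
       ∀ i, quasiGreedy q x (n + 1 + i) = alphaSeq q i)) := by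
  have hxN : x ≤ topDigit q / (q - 1) := by rw [topDigit_cast hq]; exact hx.2
  have hxpos : 0 < x := lt_of_le_of_ne hx.1 hx0.symm
  have hinf := infiniteSeq_quasiGreedy hq hxpos hxN
  refine ⟨hinf, ⟨fun h => h ▸ hinf, fun h => ?_⟩, fun n hn hzero => ?_⟩
  · have hne : ∀ m, gRem q x m ≠ 0 := fun m hm => by
      obtain ⟨i, hi, hi0⟩ := h m
      exact hi0 (greedy_eq_zero_of_gRem (gRem_eq_zero_of_le hm hi))
    exact funext fun n => quasiGreedy_eq_greedy hq hx.1 hxN fun i _ => hne i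
  · have hne : ∀ i, i ≤ n → gRem q x i ≠ 0 := fun i hi h0 =>
      hn (greedy_eq_zero_of_gRem (gRem_eq_zero_of_le h0 hi))
    have hlast : gRem q x (n + 1) = 0 := by
      refine le_antisymm ?_ (gRem_mem hq hx.1 hxN _).1
      refine nonpos_of_geometric_of_bounded hq (fun m => (gRem_mem hq hx.1 hxN m).2) fun m hm => ?_
      have hd : gDigit q (gRem q x m) = 0 := hzero m hm
      simp [gRem, hd]
    have hrem := qgRem_eq_gRem hq hx.1 hxN hne
    have hdig : qgDigit q (gRem q x n) = gDigit q (gRem q x n) - 1 :=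
      qgDigit_of_step_eq_zero hlast
    have hone : qgRem q x (n + 1) = 1 := by
      have hd : 1 ≤ gDigit q (gRem q x n) := Nat.one_le_iff_ne_zero.2 hn
      have hl : q * gRem q x n - gDigit q (gRem q x n) = 0 := hlast
      simp only [qgRem, hrem, hdig]
      push_cast [hd]
      linarith
    refine ⟨fun i hi => quasiGreedy_eq_greedy hq hx.1 hxN fun j hj => hne j (by omega), ?_, ?_⟩
    · simpa only [quasiGreedy, greedy, hrem] using hdig
    · intro i
      simp only [alphaSeq, quasiGreedy]
      rw [qgRem_add, hone]
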